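/- Convolution of q-Hermite Gaussians: for r, l ≥ 0 and 0 < γ < 1, (h̃_r(X;q) e_{q²}(-X²)) *_γ (h̃_l(X;q) e_{q²}(-X²)) = c_q(γ) q^{lr} Σ_{k≥0} q^{3k²} q^{2(r+l)k}/(q²;q²)_k · h̃_{l+r+2k}(X;q) e_{q²}(-X²). In particular, since the right side is symmetric in r and l, polynomials times the q-Gaussian commute under q-convolution. -/

import Mathlib

open scoped BigOperators

noncomputable section

/-- finite q-Pochhammer symbol `(a;q)_k` -/
def qPoch (q a : ℝ) (k : ℕ) : ℝ := ∏ j ∈ Finset.range k, (1 - a * q ^ j)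

/-- infinite q-Pochhammer symbol `(a;q)_∞` -/
def qPochInf (q a : ℝ) : ℝ := ∏' j : ℕ, (1 - a * q ^ j)

/-- q-integral over the lattice `L(γ) = {± q^k γ}` -/
def qInt (q γ : ℝ) (f : ℝ → ℝ) : ℝ :=
  (1 - q) * ∑' k : ℤ, (q ^ k * γ) * (f (q ^ k * γ) + f (-(q ^ k * γ)))

/-- k-th q-moment -/
def qMoment (q γ : ℝ) (e : ℕ) (f : ℝ → ℝ) : ℝ :=
  q ^ (e * (e + 1) / 2) * qInt q γ (fun x => f x * x ^ e)

/-- k-th strict q-moment -/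
def qNu (q γ : ℝ) (e : ℕ) (f : ℝ → ℝ) : ℝ :=
  q ^ (e * (e + 1) / 2) * qInt q γ (fun x => |f x * x ^ e|)

/-- q-derivative -/
def qDeriv (q : ℝ) (f : ℝ → ℝ) : ℝ → ℝ := fun x => (f x - f (q * x)) / ((1 - q) * x)

/-- q-factorial `[e]_q!` -/
def qFact (q : ℝ) (e : ℕ) : ℝ := qPoch q q e / (1 - q) ^ e

/-- q-binomial coefficient -/
def qBinom (q : ℝ) (n k : ℕ) : ℝ := qPoch q q n / (qPoch q q k * qPoch q q (n - k))

/-- q-convolution -/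
def qConv (q γ : ℝ) (f g : ℝ → ℝ) : ℝ → ℝ :=
  fun x => ∑' e : ℕ, (-1) ^ e * qMoment q γ e f / qFact q e * (qDeriv q)^[e] g x

/-- the q-Gaussian `e_{q²}(-x²)` -/
def qGauss (q : ℝ) : ℝ → ℝ := fun x => 1 / qPochInf (q ^ 2) (-(x ^ 2))

/-- discrete q-Hermite II polynomials -/
def qHermiteII (q : ℝ) (k : ℕ) (x : ℝ) : ℝ :=
  qPoch q q k * ∑ l ∈ Finset.range (k / 2 + 1),
    (-1) ^ l * q ^ (2 * l ^ 2 + l) / q ^ (2 * l * k) * x ^ (k - 2 * l) /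
      (qPoch (q ^ 2) (q ^ 2) l * qPoch q q (k - 2 * l))

/-- discrete delta function on the lattice, supported at `η γ q^p` -/
def qdelta (q γ η : ℝ) (p : ℤ) : ℝ → ℝ := fun x => if x = η * γ * q ^ p then 1 else 0

/-!
The `q`-derivative raises the degree: `D_q (h̃_n e) = -q ^ n / (1 - q) * h̃_{n+1} e`, where
`e = e_{q²}(-x²)`. Iterating it computes the derivatives in the `q`-convolution. Since a
`q`-derivative has `q`-integral zero, it also gives `∫ h̃_{n+1} e = 0`, and with the three-term
recurrence of the `h̃_n` this determines every moment `∫ x ^ p h̃_r e`. Only `p = r + 2 * k`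
contributes, which is the convolution formula. The formula is symmetric in `r` and `l`, the `h̃_n`
span the polynomials and the terms of the convolution are bilinear, so commutativity extends from
the `h̃_n` to all polynomials.
-/

open Polynomial Filter Topology

section

variable {q : ℝ}

/-! ### q-Pochhammer symbols -/

lemma qPoch_self_succ (q : ℝ) (k : ℕ) :
    qPoch q q (k + 1) = qPoch q q k * (1 - q ^ (k + 1)) := by
  rw [qPoch, Finset.prod_range_succ, pow_succ' q k, qPoch]

lemma qPoch_sq_succ (q : ℝ) (k : ℕ) :
    qPoch (q ^ 2) (q ^ 2) (k + 1) = qPoch (q ^ 2) (q ^ 2) k * (1 - q ^ (2 * k + 2)) := by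
  rw [qPoch_self_succ, ← pow_mul, mul_add_one]

lemma one_sub_ne_zero_of_abs_lt_one (hq1 : |q| < 1) : 1 - q ≠ 0 :=
  (sub_pos.2 (lt_of_abs_lt hq1)).ne'

lemma one_sub_pow_succ_pos (hq1 : |q| < 1) (n : ℕ) : 0 < 1 - q ^ (n + 1) := by
  have : |q ^ (n + 1)| < 1 := by
    rw [abs_pow]
    exact pow_lt_one₀ (abs_nonneg q) hq1 n.succ_ne_zero
  exact sub_pos.2 (lt_of_abs_lt this)

lemma qPoch_self_pos (hq1 : |q| < 1) (k : ℕ) : 0 < qPoch q q k :=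
  Finset.prod_pos fun j _ => by
    rw [← pow_succ']
    exact one_sub_pow_succ_pos hq1 j

lemma qPoch_sq_pos (hq1 : |q| < 1) (k : ℕ) : 0 < qPoch (q ^ 2) (q ^ 2) k :=
  qPoch_self_pos (by rwa [abs_pow, sq_lt_one_iff₀ (abs_nonneg q)]) k

lemma pow_one_sub_le_qPoch_self (h0 : 0 ≤ q) (h1 : q ≤ 1) (k : ℕ) :
    (1 - q) ^ k ≤ qPoch q q k := by
  calc (1 - q) ^ k = ∏ _j ∈ Finset.range k, (1 - q) := by
        rw [Finset.prod_const, Finset.card_range]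
    _ ≤ qPoch q q k := Finset.prod_le_prod (fun _ _ => sub_nonneg.2 h1) fun j _ =>
        sub_le_sub_left (mul_le_of_le_one_right h0 (pow_le_one₀ h0 h1)) 1

/-! ### The q-Gaussian on the lattice -/

lemma qGauss_neg (q x : ℝ) : qGauss q (-x) = qGauss q x := by
  rw [qGauss, neg_sq, qGauss]

lemma qGauss_mul (hq1 : |q| < 1) (x : ℝ) : qGauss q (q * x) = (1 + x ^ 2) * qGauss q x := by
  have hsum : Summable fun j : ℕ => (q * x) ^ 2 * (q ^ 2) ^ j :=
    (summable_geometric_of_abs_lt_one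
      (by rwa [abs_pow, sq_lt_one_iff₀ (abs_nonneg q)])).mul_left _
  have hterm (j : ℕ) :
      1 - -(x ^ 2) * (q ^ 2) ^ (j + 1) = 1 - -((q * x) ^ 2) * (q ^ 2) ^ j := by ring
  have hmul : Multipliable fun j : ℕ => 1 - -((q * x) ^ 2) * (q ^ 2) ^ j := by
    simpa only [neg_mul, sub_neg_eq_add] using Real.multipliable_one_add_of_summable hsum
  have hprod : qPochInf (q ^ 2) (-(x ^ 2)) =
      (1 + x ^ 2) * qPochInf (q ^ 2) (-((q * x) ^ 2)) := by
    rw [qPochInf, tprod_eq_zero_mul' (hmul.congr fun j => (hterm j).symm), tprod_congr hterm,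
      pow_zero, mul_one, sub_neg_eq_add, qPochInf]
  have hx : 1 + x ^ 2 ≠ 0 := by positivity
  rw [qGauss, qGauss, hprod]
  field_simp

lemma norm_pow_mul_qGauss_mul (hq1 : |q| < 1) (n : ℕ) (x : ℝ) :
    ‖(q * x) ^ n * qGauss q (q * x)‖ = |q| ^ n * (1 + x ^ 2) * ‖x ^ n * qGauss q x‖ := by
  rw [qGauss_mul hq1, mul_pow, mul_mul_mul_comm, norm_mul, norm_mul (q ^ n), norm_pow,
    Real.norm_eq_abs, Real.norm_of_nonneg (by positivity : 0 ≤ 1 + x ^ 2)]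

lemma summable_pow_mul_qGauss_mul_pow (hq1 : |q| < 1) (γ : ℝ) {n : ℕ} (hn : n ≠ 0) :
    Summable fun k : ℕ => (q ^ k * γ) ^ n * qGauss q (q ^ k * γ) := by
  obtain ⟨ρ, hρ, hρ1⟩ := exists_between (pow_lt_one₀ (abs_nonneg q) hq1 hn)
  have hlim : Tendsto (fun k : ℕ => |q| ^ n * (1 + (q ^ k * γ) ^ 2)) atTop
      (𝓝 (|q| ^ n * (1 + (0 * γ) ^ 2))) :=
    ((((tendsto_pow_atTop_nhds_zero_of_abs_lt_one hq1).mul_const γ).pow 2).const_add 1).const_mul _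
  refine summable_of_ratio_norm_eventually_le hρ1 ?_
  filter_upwards [hlim.eventually_le_const (u := ρ) (by simpa using hρ)] with k hk
  rw [pow_succ', mul_assoc q, norm_pow_mul_qGauss_mul hq1]
  gcongr

lemma summable_pow_mul_qGauss_div_pow (hq0 : q ≠ 0) (hq1 : |q| < 1) {γ : ℝ} (hγ : γ ≠ 0) (n : ℕ) :
    Summable fun k : ℕ => (γ / q ^ k) ^ n * qGauss q (γ / q ^ k) := by
  have hlim : Tendsto (fun k : ℕ => |q| ^ n * (1 + (γ / q ^ (k + 1)) ^ 2)) atTop atTop := by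
    have hone : 1 < (q ^ 2)⁻¹ :=
      (one_lt_inv₀ (by positivity)).2 ((sq_lt_one_iff_abs_lt_one q).2 hq1)
    have hpow : Tendsto (fun k : ℕ => γ ^ 2 * (q ^ 2)⁻¹ ^ (k + 1)) atTop atTop :=
      ((tendsto_pow_atTop_atTop_of_one_lt hone).comp
        (tendsto_add_atTop_nat 1)).const_mul_atTop (by positivity)
    refine ((tendsto_atTop_add_const_left _ 1 hpow).const_mul_atTop
      (by positivity : 0 < |q| ^ n)).congr fun k => ?_
    rw [div_pow, inv_pow, ← pow_mul, ← pow_mul, mul_comm 2, div_eq_mul_inv]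
  refine summable_of_ratio_norm_eventually_le (r := 1 / 2) (by norm_num) ?_
  filter_upwards [hlim.eventually_ge_atTop 2] with k hk
  have hstep : q * (γ / q ^ (k + 1)) = γ / q ^ k := by
    rw [pow_succ']
    field_simp
  rw [← hstep, norm_pow_mul_qGauss_mul hq1]
  nlinarith [norm_nonneg ((γ / q ^ (k + 1)) ^ n * qGauss q (γ / q ^ (k + 1)))]

lemma summable_pow_mul_qGauss (hq0 : q ≠ 0) (hq1 : |q| < 1) (γ : ℝ) {n : ℕ} (hn : n ≠ 0) :
    Summable fun k : ℤ => (q ^ k * γ) ^ n * qGauss q (q ^ k * γ) := by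
  rcases eq_or_ne γ 0 with rfl | hγ
  · simp [hn, summable_zero]
  · refine Summable.of_nat_of_neg ?_ ?_
    · simpa only [zpow_natCast] using summable_pow_mul_qGauss_mul_pow hq1 γ hn
    · simpa only [zpow_neg, zpow_natCast, inv_mul_eq_div] using
        summable_pow_mul_qGauss_div_pow hq0 hq1 hγ n

/-! ### The q-integral -/

/-- Convergence of the series defining the `q`-integral `qInt q γ f`. -/
def QIntegrable (q γ : ℝ) (f : ℝ → ℝ) : Prop :=
  Summable fun k : ℤ => (q ^ k * γ) * (f (q ^ k * γ) + f (-(q ^ k * γ)))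

lemma qInt_add {γ : ℝ} {f g : ℝ → ℝ} (hf : QIntegrable q γ f) (hg : QIntegrable q γ g) :
    qInt q γ (f + g) = qInt q γ f + qInt q γ g := by
  rw [qInt, qInt, qInt, ← mul_add, ← hf.tsum_add hg]
  congr 1
  exact tsum_congr fun k => by simp only [Pi.add_apply]; ring

lemma qInt_smul (q γ a : ℝ) (f : ℝ → ℝ) : qInt q γ (a • f) = a * qInt q γ f := by
  rw [qInt, qInt, mul_left_comm a, ← tsum_mul_left (a := a)]
  congr 1
  exact tsum_congr fun k => by simp only [Pi.smul_apply, smul_eq_mul]; ring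

lemma qInt_congr {f g : ℝ → ℝ} (h : ∀ x ≠ 0, f x = g x) (γ : ℝ) : qInt q γ f = qInt q γ g := by
  rw [qInt, qInt]
  congr 1
  refine tsum_congr fun k => ?_
  rcases eq_or_ne (q ^ k * γ) 0 with hk | hk
  · rw [hk, zero_mul, zero_mul]
  · rw [h _ hk, h _ (neg_ne_zero.2 hk)]

lemma qInt_qDeriv_eq_zero {γ : ℝ} {f : ℝ → ℝ} (hq0 : q ≠ 0) (hq1 : q ≠ 1)
    (hf : Summable fun k : ℤ => f (q ^ k * γ) - f (-(q ^ k * γ))) :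
    qInt q γ (qDeriv q f) = 0 := by
  set u : ℤ → ℝ := fun k => f (q ^ k * γ) - f (-(q ^ k * γ)) with hu
  have hterm (k : ℤ) : q ^ k * γ * (qDeriv q f (q ^ k * γ) + qDeriv q f (-(q ^ k * γ))) =
      (1 - q)⁻¹ * (u k - u (k + 1)) := by
    rw [hu]
    beta_reduce
    rw [zpow_add_one₀ hq0, mul_comm (q ^ k) q, mul_assoc q]
    generalize q ^ k * γ = y
    have hq : 1 - q ≠ 0 := sub_ne_zero.2 hq1.symm
    rcases eq_or_ne y 0 with rfl | hy
    · simp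
    · rw [qDeriv, qDeriv, mul_neg q y]
      field_simp
      ring
  have hshift : Summable fun k => u (k + 1) := (Equiv.addRight (1 : ℤ)).summable_iff.2 hf
  have htsum : ∑' k, u (k + 1) = ∑' k, u k := (Equiv.addRight (1 : ℤ)).tsum_eq u
  rw [qInt, tsum_congr hterm, tsum_mul_left, hf.tsum_sub hshift, htsum, sub_self, mul_zero,
    mul_zero]

/-- The `q`-derivative as an endomorphism of the space of real functions. -/
def qDerivₗ (q : ℝ) : Module.End ℝ (ℝ → ℝ) where
  toFun := qDeriv q
  map_add' f g := by
    ext x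
    simp only [qDeriv, Pi.add_apply]
    ring
  map_smul' a f := by
    ext x
    simp only [qDeriv, Pi.smul_apply, smul_eq_mul, RingHom.id_apply]
    ring

lemma qDeriv_smul (q a : ℝ) (f : ℝ → ℝ) : qDeriv q (a • f) = a • qDeriv q f :=
  map_smul (qDerivₗ q) a f

lemma qDeriv_congr (hq0 : q ≠ 0) {f g : ℝ → ℝ} (h : ∀ x ≠ 0, f x = g x) {x : ℝ} (hx : x ≠ 0) :
    qDeriv q f x = qDeriv q g x := by
  rw [qDeriv, qDeriv, h x hx, h (q * x) (mul_ne_zero hq0 hx)]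

/-! ### Polynomials times the q-Gaussian -/

/-- The function `x ↦ p(x) e_{q²}(-x²)`, as a linear function of the polynomial `p`. -/
def polyMulGauss (q : ℝ) : ℝ[X] →ₗ[ℝ] ℝ → ℝ where
  toFun p := fun x => p.eval x * qGauss q x
  map_add' p₁ p₂ := by
    ext x
    simp only [eval_add, Pi.add_apply, add_mul]
  map_smul' a p := by
    ext x
    simp only [eval_smul, Pi.smul_apply, smul_eq_mul, RingHom.id_apply, mul_assoc]

lemma polyMulGauss_apply (q : ℝ) (p : ℝ[X]) (x : ℝ) :
    polyMulGauss q p x = p.eval x * qGauss q x := rfl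

lemma polyMulGauss_comp_neg_X (q : ℝ) (p : ℝ[X]) (x : ℝ) :
    polyMulGauss q (p.comp (-X)) x = polyMulGauss q p (-x) := by
  simp only [polyMulGauss_apply, eval_comp, eval_neg, eval_X, qGauss_neg]

lemma summable_mul_polyMulGauss (hq0 : q ≠ 0) (hq1 : |q| < 1) (γ : ℝ) (p : ℝ[X]) :
    Summable fun k : ℤ => q ^ k * γ * polyMulGauss q p (q ^ k * γ) := by
  induction p using Polynomial.induction_on' with
  | add p₁ p₂ h₁ h₂ => exact (h₁.add h₂).congr fun k => by rw [map_add, Pi.add_apply, mul_add]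
  | monomial n a =>
    refine ((summable_pow_mul_qGauss hq0 hq1 γ n.succ_ne_zero).mul_left a).congr fun k => ?_
    rw [polyMulGauss_apply, eval_monomial, Nat.succ_eq_add_one, pow_succ]
    ring

lemma qIntegrable_polyMulGauss (hq0 : q ≠ 0) (hq1 : |q| < 1) (γ : ℝ) (p : ℝ[X]) :
    QIntegrable q γ (polyMulGauss q p) :=
  (summable_mul_polyMulGauss hq0 hq1 γ (p + p.comp (-X))).congr fun k => by
    rw [map_add, Pi.add_apply, polyMulGauss_comp_neg_X]

lemma summable_polyMulGauss_sub_neg (hq0 : q ≠ 0) (hq1 : |q| < 1) (γ : ℝ) (p : ℝ[X]) :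
    Summable fun k : ℤ => polyMulGauss q p (q ^ k * γ) - polyMulGauss q p (-(q ^ k * γ)) := by
  obtain ⟨p', hp'⟩ : X ∣ p - p.comp (-X) := by
    rw [X_dvd_iff, coeff_zero_eq_eval_zero]
    simp
  refine (summable_mul_polyMulGauss hq0 hq1 γ p').congr fun k => ?_
  rw [← polyMulGauss_comp_neg_X, ← Pi.sub_apply, ← map_sub, hp', polyMulGauss_apply,
    polyMulGauss_apply, eval_mul, eval_X, mul_assoc (q ^ k * γ)]

/-- The `q`-integral of a polynomial against the `q`-Gaussian, as a linear functional. -/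
def qGaussIntegral (hq0 : q ≠ 0) (hq1 : |q| < 1) (γ : ℝ) : ℝ[X] →ₗ[ℝ] ℝ where
  toFun p := qInt q γ (polyMulGauss q p)
  map_add' p₁ p₂ := by
    rw [map_add, qInt_add (qIntegrable_polyMulGauss hq0 hq1 γ p₁)
      (qIntegrable_polyMulGauss hq0 hq1 γ p₂)]
  map_smul' a p := by
    rw [map_smul, qInt_smul, RingHom.id_apply, smul_eq_mul]

lemma qGaussIntegral_apply (hq0 : q ≠ 0) (hq1 : |q| < 1) (γ : ℝ) (p : ℝ[X]) :
    qGaussIntegral hq0 hq1 γ p = qInt q γ (polyMulGauss q p) := rfl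

lemma qGaussIntegral_one (hq0 : q ≠ 0) (hq1 : |q| < 1) (γ : ℝ) :
    qGaussIntegral hq0 hq1 γ 1 = qInt q γ (qGauss q) := by
  rw [qGaussIntegral_apply]
  congr 1
  ext x
  rw [polyMulGauss_apply, eval_one, one_mul]

lemma qMoment_polyMulGauss (hq0 : q ≠ 0) (hq1 : |q| < 1) (γ : ℝ) (e : ℕ) (p : ℝ[X]) :
    qMoment q γ e (polyMulGauss q p) =
      q ^ (e + 1).choose 2 * qGaussIntegral hq0 hq1 γ (X ^ e * p) := by
  rw [qMoment, qGaussIntegral_apply, Nat.choose_two_right, Nat.add_sub_cancel, mul_comm (e + 1) e]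
  congr 2
  ext x
  rw [polyMulGauss_apply, polyMulGauss_apply, eval_mul, eval_pow, eval_X]
  ring

/-! ### The discrete q-Hermite II polynomials -/

/-- The discrete `q`-Hermite II polynomials as elements of `ℝ[X]`, defined by their three-term
recurrence; `eval_qHermitePoly` identifies them with `qHermiteII`. -/
def qHermitePoly (q : ℝ) : ℕ → ℝ[X]
  | 0 => 1
  | 1 => X
  | n + 2 => X * qHermitePoly q (n + 1) -
      C ((1 - q ^ (n + 1)) / q ^ (2 * n + 1)) * qHermitePoly q n

lemma qHermitePoly_zero (q : ℝ) : qHermitePoly q 0 = 1 := by rw [qHermitePoly]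

lemma qHermitePoly_one (q : ℝ) : qHermitePoly q 1 = X := by rw [qHermitePoly]

lemma qHermitePoly_add_two (q : ℝ) (n : ℕ) :
    qHermitePoly q (n + 2) = X * qHermitePoly q (n + 1) -
      C ((1 - q ^ (n + 1)) / q ^ (2 * n + 1)) * qHermitePoly q n := by
  rw [qHermitePoly]

/-- The coefficient of `x ^ (n - 2 * l)` in the discrete `q`-Hermite II polynomial of degree `n`,
extended by `0` to `2 * l > n`, where the truncated subtraction would be meaningless. -/
def qHermiteCoeff (q : ℝ) (n l : ℕ) : ℝ :=
  if 2 * l ≤ n then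
    qPoch q q n * ((-1) ^ l * q ^ (2 * l ^ 2 + l) / q ^ (2 * l * n)) /
      (qPoch (q ^ 2) (q ^ 2) l * qPoch q q (n - 2 * l))
  else 0

lemma qHermiteCoeff_of_le {n l : ℕ} (h : 2 * l ≤ n) :
    qHermiteCoeff q n l = qPoch q q n * ((-1) ^ l * q ^ (2 * l ^ 2 + l) / q ^ (2 * l * n)) /
      (qPoch (q ^ 2) (q ^ 2) l * qPoch q q (n - 2 * l)) := if_pos h

lemma qHermiteCoeff_of_lt {n l : ℕ} (h : n < 2 * l) : qHermiteCoeff q n l = 0 := if_neg h.not_ge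

lemma qHermiteCoeff_zero_right (hq1 : |q| < 1) (n : ℕ) : qHermiteCoeff q n 0 = 1 := by
  have hn := (qPoch_self_pos hq1 n).ne'
  have h0 : qPoch (q ^ 2) (q ^ 2) 0 = 1 := Finset.prod_range_zero _
  simp [qHermiteCoeff, hn, h0]

lemma qHermiteII_eq_sum (q : ℝ) {n N : ℕ} (hN : n / 2 + 1 ≤ N) (x : ℝ) :
    qHermiteII q n x = ∑ l ∈ Finset.range N, qHermiteCoeff q n l * x ^ (n - 2 * l) := by
  rw [qHermiteII, Finset.mul_sum]
  refine Finset.sum_congr_of_eq_on_inter ?_ ?_ ?_ <;> simp only [Finset.mem_range]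
  · intro l hl hl'
    omega
  · intro l _ hl
    rw [qHermiteCoeff_of_lt (by omega), zero_mul]
  · intro l hl _
    rw [qHermiteCoeff_of_le (by omega)]
    ring

lemma qHermiteCoeff_add_two (hq0 : q ≠ 0) (hq1 : |q| < 1) {n l : ℕ} (hl : 2 * l ≤ n) :
    qHermiteCoeff q (n + 2) (l + 1) = qHermiteCoeff q (n + 1) (l + 1) -
      (1 - q ^ (n + 1)) / q ^ (2 * n + 1) * qHermiteCoeff q n l := by
  have hP (k : ℕ) : qPoch q q k ≠ 0 := (qPoch_self_pos hq1 k).ne'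
  have hQl : qPoch (q ^ 2) (q ^ 2) l ≠ 0 := (qPoch_sq_pos hq1 l).ne'
  have hne (k : ℕ) : 1 - q ^ (k + 1) ≠ 0 := (one_sub_pow_succ_pos hq1 k).ne'
  have hl2 : 1 - q ^ (2 * l + 2) ≠ 0 := hne (2 * l + 1)
  rcases hl.eq_or_lt with rfl | hlt
  · have hP0 := hP 0
    rw [qHermiteCoeff_of_le (by omega), qHermiteCoeff_of_lt (by omega), qHermiteCoeff_of_le le_rfl,
      show 2 * l + 2 - 2 * (l + 1) = 0 by omega, Nat.sub_self, qPoch_sq_succ,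
      qPoch_self_succ q (2 * l + 1), qPoch_self_succ q (2 * l)]
    field_simp
    ring
  · obtain ⟨m, rfl⟩ := Nat.exists_eq_add_of_lt hlt
    have hPm := hP m
    have hm := hne m
    rw [qHermiteCoeff_of_le (by omega), qHermiteCoeff_of_le (by omega),
      qHermiteCoeff_of_le (by omega), show 2 * l + m + 1 + 2 - 2 * (l + 1) = m + 1 by omega,
      show 2 * l + m + 1 + 1 - 2 * (l + 1) = m by omega,
      show 2 * l + m + 1 - 2 * l = m + 1 by omega, qPoch_sq_succ,
      qPoch_self_succ q (2 * l + m + 1 + 1), qPoch_self_succ q (2 * l + m + 1),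
      qPoch_self_succ q m]
    field_simp
    ring

lemma qHermiteII_add_two (hq0 : q ≠ 0) (hq1 : |q| < 1) (n : ℕ) (x : ℝ) :
    qHermiteII q (n + 2) x = x * qHermiteII q (n + 1) x -
      (1 - q ^ (n + 1)) / q ^ (2 * n + 1) * qHermiteII q n x := by
  have hterm (l : ℕ) (hl : l ∈ Finset.range (n / 2 + 1)) :
      qHermiteCoeff q (n + 2) (l + 1) * x ^ (n + 2 - 2 * (l + 1)) =
        x * (qHermiteCoeff q (n + 1) (l + 1) * x ^ (n + 1 - 2 * (l + 1))) -
          (1 - q ^ (n + 1)) / q ^ (2 * n + 1) * (qHermiteCoeff q n l * x ^ (n - 2 * l)) := by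
    have hln : 2 * l ≤ n := by
      have := Finset.mem_range.1 hl
      omega
    rw [qHermiteCoeff_add_two hq0 hq1 hln, show n + 2 - 2 * (l + 1) = n - 2 * l by omega]
    rcases hln.eq_or_lt with rfl | hlt
    · rw [qHermiteCoeff_of_lt (by omega : 2 * l + 1 < 2 * (l + 1))]
      ring
    · rw [show n - 2 * l = (n + 1 - 2 * (l + 1)) + 1 by omega]
      ring
  rw [qHermiteII_eq_sum q (by omega : (n + 2) / 2 + 1 ≤ n / 2 + 1 + 1),
    qHermiteII_eq_sum q (by omega : (n + 1) / 2 + 1 ≤ n / 2 + 1 + 1),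
    qHermiteII_eq_sum q (le_refl (n / 2 + 1)), Finset.sum_range_succ' _ (n / 2 + 1),
    Finset.sum_range_succ' _ (n / 2 + 1), Finset.sum_congr rfl hterm, Finset.sum_sub_distrib,
    ← Finset.mul_sum, ← Finset.mul_sum, qHermiteCoeff_zero_right hq1, qHermiteCoeff_zero_right hq1]
  simp only [mul_zero, Nat.sub_zero]
  ring

lemma eval_qHermitePoly (hq0 : q ≠ 0) (hq1 : |q| < 1) (n : ℕ) (x : ℝ) :
    (qHermitePoly q n).eval x = qHermiteII q n x := by
  induction n using Nat.twoStepInduction with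
  | zero => simp [qHermitePoly_zero, qHermiteII, qPoch]
  | one =>
    simp [qHermitePoly_one, qHermiteII, qPoch,
      mul_div_cancel₀ x (one_sub_ne_zero_of_abs_lt_one hq1)]
  | more n ih₁ ih₂ =>
    rw [qHermitePoly_add_two, qHermiteII_add_two hq0 hq1, ← ih₁, ← ih₂, eval_sub, eval_mul,
      eval_mul, eval_X, eval_C]

lemma polyMulGauss_qHermitePoly (hq0 : q ≠ 0) (hq1 : |q| < 1) (n : ℕ) (x : ℝ) :
    polyMulGauss q (qHermitePoly q n) x = qHermiteII q n x * qGauss q x := by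
  rw [polyMulGauss_apply, eval_qHermitePoly hq0 hq1]

lemma degree_qHermitePoly (q : ℝ) (n : ℕ) : (qHermitePoly q n).degree = n := by
  induction n using Nat.twoStepInduction with
  | zero => rw [qHermitePoly_zero, degree_one, Nat.cast_zero]
  | one => rw [qHermitePoly_one, degree_X, Nat.cast_one]
  | more n ih₁ ih₂ =>
    have hX : (X * qHermitePoly q (n + 1)).degree = ((n + 2 : ℕ) : WithBot ℕ) := by
      rw [degree_mul, degree_X, ih₂]
      norm_cast
      ring
    rw [qHermitePoly_add_two, degree_sub_eq_left_of_degree_lt, hX]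
    rw [hX, ← smul_eq_C_mul]
    refine (degree_smul_le _ _).trans_lt ?_
    rw [ih₁]
    exact_mod_cast (by omega : n < n + 2)

lemma span_qHermitePoly (q : ℝ) : Submodule.span ℝ (Set.range (qHermitePoly q)) = ⊤ :=
  let S : Polynomial.Sequence ℝ := ⟨qHermitePoly q, degree_qHermitePoly q⟩
  S.span fun n => (leadingCoeff_ne_zero.2 (S.ne_zero n)).isUnit

lemma eval_mul_qHermitePoly (hq0 : q ≠ 0) (n : ℕ) (x : ℝ) :
    (1 + x ^ 2) * (qHermitePoly q n).eval (q * x) =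
      (qHermitePoly q n).eval x + q ^ n * x * (qHermitePoly q (n + 1)).eval x := by
  induction n using Nat.twoStepInduction with
  | zero =>
    simp only [qHermitePoly_zero, zero_add, qHermitePoly_one, eval_one, eval_X]
    ring
  | one =>
    simp only [qHermitePoly_add_two, qHermitePoly_zero, zero_add, qHermitePoly_one, eval_sub,
      eval_mul, eval_X, eval_C, eval_one]
    field_simp
    ring
  | more n ih₁ ih₂ =>
    rw [qHermitePoly_add_two q (n + 1), qHermitePoly_add_two q n]
    rw [qHermitePoly_add_two q n] at ih₂
    simp only [eval_sub, eval_mul, eval_X, eval_C] at ih₂ ⊢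
    rw [mul_sub, mul_left_comm, ih₂, mul_left_comm, ih₁]
    field_simp
    ring

lemma qDeriv_polyMulGauss_qHermitePoly (hq0 : q ≠ 0) (hq1 : |q| < 1) (n : ℕ) {x : ℝ}
    (hx : x ≠ 0) :
    qDeriv q (polyMulGauss q (qHermitePoly q n)) x =
      -(q ^ n / (1 - q)) * polyMulGauss q (qHermitePoly q (n + 1)) x := by
  have hq := one_sub_ne_zero_of_abs_lt_one hq1
  rw [qDeriv, polyMulGauss_apply, polyMulGauss_apply, polyMulGauss_apply, qGauss_mul hq1]
  field_simp
  linear_combination -qGauss q x * eval_mul_qHermitePoly hq0 n x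

lemma iterate_qDeriv_polyMulGauss_qHermitePoly (hq0 : q ≠ 0) (hq1 : |q| < 1) (l e : ℕ) {x : ℝ}
    (hx : x ≠ 0) :
    (qDeriv q)^[e] (polyMulGauss q (qHermitePoly q l)) x =
      (-1) ^ e * q ^ (l * e + e.choose 2) / (1 - q) ^ e *
        polyMulGauss q (qHermitePoly q (l + e)) x := by
  have hq := one_sub_ne_zero_of_abs_lt_one hq1
  induction e generalizing x with
  | zero => simp
  | succ e ih =>
    have hderiv := qDeriv_congr hq0 (g := ((-1) ^ e * q ^ (l * e + e.choose 2) / (1 - q) ^ e) •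
      polyMulGauss q (qHermitePoly q (l + e))) (fun y hy => ih hy) hx
    rw [Function.iterate_succ_apply', hderiv, qDeriv_smul, Pi.smul_apply, smul_eq_mul,
      qDeriv_polyMulGauss_qHermitePoly hq0 hq1 _ hx, Nat.choose_succ_succ' e 1,
      Nat.choose_one_right, add_assoc l e 1]
    field_simp
    ring

/-! ### Growth of the q-Hermite polynomials -/

lemma abs_eval_qHermitePoly_le (hq0 : q ≠ 0) (hq1 : |q| < 1) (n : ℕ) (x : ℝ) :
    |(qHermitePoly q n).eval x| ≤ (|x| + 2) ^ n / |q| ^ n.choose 2 := by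
  induction n using Nat.twoStepInduction with
  | zero => simp [qHermitePoly_zero]
  | one => simp [qHermitePoly_one]
  | more n ih₁ ih₂ =>
    have hx := abs_nonneg x
    have hc : |(1 - q ^ (n + 1)) / q ^ (2 * n + 1)| ≤ 2 / |q| ^ (2 * n + 1) := by
      rw [abs_div, abs_pow]
      gcongr
      calc |1 - q ^ (n + 1)| ≤ |1| + |q ^ (n + 1)| := abs_sub _ _
        _ ≤ 1 + 1 := by
          rw [abs_one, abs_pow]
          gcongr
          exact pow_le_one₀ (abs_nonneg q) hq1.le
        _ = 2 := one_add_one_eq_two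
    have hchoose₁ : (n + 1).choose 2 = n.choose 2 + n := by
      rw [Nat.choose_succ_succ' n 1, Nat.choose_one_right, add_comm]
    have hchoose₂ : (n + 2).choose 2 = n.choose 2 + (2 * n + 1) := by
      rw [Nat.choose_succ_succ' (n + 1) 1, Nat.choose_one_right, hchoose₁]
      ring
    rw [qHermitePoly_add_two, eval_sub, eval_mul, eval_mul, eval_X, eval_C]
    calc _ ≤ |x| * |(qHermitePoly q (n + 1)).eval x| +
          |(1 - q ^ (n + 1)) / q ^ (2 * n + 1)| * |(qHermitePoly q n).eval x| := by
          rw [← abs_mul, ← abs_mul]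
          exact abs_sub _ _
      _ ≤ |x| * ((|x| + 2) ^ (n + 1) / |q| ^ (n + 1).choose 2) +
          2 / |q| ^ (2 * n + 1) * ((|x| + 2) ^ n / |q| ^ n.choose 2) := by
        gcongr
      _ = (|x| * (|x| + 2) * |q| ^ (n + 1) + 2) * (|x| + 2) ^ n / |q| ^ (n + 2).choose 2 := by
        rw [hchoose₁, hchoose₂]
        field_simp
        ring
      _ ≤ (|x| * (|x| + 2) * 1 + 2) * (|x| + 2) ^ n / |q| ^ (n + 2).choose 2 := by
        gcongr
        exact pow_le_one₀ (abs_nonneg q) hq1.le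
      _ ≤ (|x| + 2) ^ (n + 2) / |q| ^ (n + 2).choose 2 := by
        rw [pow_add _ n 2, mul_comm ((|x| + 2) ^ n)]
        gcongr
        nlinarith

lemma summable_pow_mul_pow_sq (hq1 : |q| < 1) (B : ℝ) :
    Summable fun k : ℕ => B ^ k * q ^ (k ^ 2) := by
  have hlim : Tendsto (fun k : ℕ => ‖B * q * (q ^ 2) ^ k‖) atTop (𝓝 ‖B * q * 0‖) :=
    ((tendsto_pow_atTop_nhds_zero_of_abs_lt_one
      (by rwa [abs_pow, sq_lt_one_iff₀ (abs_nonneg q)])).const_mul _).norm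
  refine summable_of_ratio_norm_eventually_le (r := 1 / 2) (by norm_num) ?_
  filter_upwards [hlim.eventually_le_const (u := 1 / 2) (by norm_num)] with k hk
  have hstep : B ^ (k + 1) * q ^ ((k + 1) ^ 2) =
      B * q * (q ^ 2) ^ k * (B ^ k * q ^ (k ^ 2)) := by ring
  rw [hstep, norm_mul]
  gcongr

lemma choose_two_add_two_mul (N k : ℕ) :
    (N + 2 * k).choose 2 + k = N.choose 2 + 2 * N * k + 2 * k ^ 2 := by
  induction k with
  | zero => simp
  | succ k ih =>
    have h : (N + 2 * (k + 1)).choose 2 = (N + 2 * k).choose 2 + 2 * (N + 2 * k) + 1 := by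
      rw [show N + 2 * (k + 1) = N + 2 * k + 1 + 1 by ring, Nat.choose_succ_succ' _ 1,
        Nat.choose_succ_succ' (N + 2 * k) 1, Nat.choose_one_right, Nat.choose_one_right]
      ring
    rw [h]
    linarith

lemma summable_qHermitePoly_series (hq0 : q ≠ 0) (hq1 : |q| < 1) (N : ℕ) (x : ℝ) :
    Summable fun k : ℕ => q ^ (3 * k ^ 2) * q ^ (2 * N * k) / qPoch (q ^ 2) (q ^ 2) k *
      (qHermitePoly q (N + 2 * k)).eval x := by
  have hq2 : q ^ 2 < 1 := (sq_lt_one_iff_abs_lt_one q).2 hq1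
  have hd : 0 < 1 - q ^ 2 := sub_pos.2 hq2
  refine Summable.of_norm_bounded ((summable_pow_mul_pow_sq (q := |q|) (by rwa [abs_abs])
    ((|x| + 2) ^ 2 * |q| / (1 - q ^ 2))).mul_left ((|x| + 2) ^ N / |q| ^ N.choose 2)) fun k => ?_
  have hP := qPoch_sq_pos hq1 k
  have hexp : |q| ^ (3 * k ^ 2) * |q| ^ (2 * N * k) * |q| ^ N.choose 2 =
      |q| ^ (N + 2 * k).choose 2 * (|q| ^ k * |q| ^ (k ^ 2)) := by
    rw [← pow_add, ← pow_add, ← pow_add, ← pow_add]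
    congr 1
    linarith [choose_two_add_two_mul N k]
  rw [norm_mul, norm_div, norm_mul, norm_pow, norm_pow, Real.norm_of_nonneg hP.le,
    Real.norm_eq_abs, Real.norm_eq_abs]
  calc _ ≤ |q| ^ (3 * k ^ 2) * |q| ^ (2 * N * k) / (1 - q ^ 2) ^ k *
        ((|x| + 2) ^ (N + 2 * k) / |q| ^ (N + 2 * k).choose 2) := by
        gcongr
        · exact pow_one_sub_le_qPoch_self (sq_nonneg q) hq2.le k
        · exact abs_eval_qHermitePoly_le hq0 hq1 _ x
    _ = |q| ^ (3 * k ^ 2) * |q| ^ (2 * N * k) * |q| ^ N.choose 2 *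
        ((|x| + 2) ^ (N + 2 * k) /
          ((1 - q ^ 2) ^ k * |q| ^ (N + 2 * k).choose 2 * |q| ^ N.choose 2)) := by
        field_simp
    _ = _ := by
        rw [hexp, div_pow, mul_pow, ← pow_mul]
        field_simp
        ring

/-! ### Moments of the q-Hermite Gaussians -/

lemma qGaussIntegral_qHermitePoly_succ (hq0 : q ≠ 0) (hq1 : |q| < 1) (γ : ℝ) (n : ℕ) :
    qGaussIntegral hq0 hq1 γ (qHermitePoly q (n + 1)) = 0 := by
  have hq := one_sub_ne_zero_of_abs_lt_one hq1
  have hderiv := qInt_qDeriv_eq_zero hq0 (lt_of_abs_lt hq1).ne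
    (summable_polyMulGauss_sub_neg hq0 hq1 γ (qHermitePoly q n))
  rw [qInt_congr (g := -(q ^ n / (1 - q)) • polyMulGauss q (qHermitePoly q (n + 1)))
    (fun x hx => qDeriv_polyMulGauss_qHermitePoly hq0 hq1 n hx) γ, qInt_smul] at hderiv
  exact (mul_eq_zero.1 hderiv).resolve_left
    (neg_ne_zero.2 (div_ne_zero (pow_ne_zero n hq0) hq))

lemma qGaussIntegral_X_pow_succ_mul (hq0 : q ≠ 0) (hq1 : |q| < 1) (γ : ℝ) (p r : ℕ) :
    qGaussIntegral hq0 hq1 γ (X ^ (p + 1) * qHermitePoly q (r + 1)) =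
      qGaussIntegral hq0 hq1 γ (X ^ p * qHermitePoly q (r + 2)) +
      (1 - q ^ (r + 1)) / q ^ (2 * r + 1) *
        qGaussIntegral hq0 hq1 γ (X ^ p * qHermitePoly q r) := by
  rw [← smul_eq_mul (_ / _), ← map_smul, ← map_add, qHermitePoly_add_two, smul_eq_C_mul]
  congr 1
  ring

lemma X_pow_succ_mul_qHermitePoly_zero (q : ℝ) (p : ℕ) :
    X ^ (p + 1) * qHermitePoly q 0 = X ^ p * qHermitePoly q 1 := by
  rw [qHermitePoly_zero, qHermitePoly_one, mul_one, pow_succ]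

lemma qGaussIntegral_X_pow_mul_eq_zero (hq0 : q ≠ 0) (hq1 : |q| < 1) (γ : ℝ) {p r : ℕ}
    (h : ∀ k, p ≠ r + 2 * k) :
    qGaussIntegral hq0 hq1 γ (X ^ p * qHermitePoly q r) = 0 := by
  induction p generalizing r with
  | zero =>
    obtain ⟨r, rfl⟩ := Nat.exists_eq_succ_of_ne_zero (h 0).symm
    rw [pow_zero, one_mul, qGaussIntegral_qHermitePoly_succ]
  | succ p ih =>
    cases r with
    | zero =>
      rw [X_pow_succ_mul_qHermitePoly_zero, ih fun k hk => h (k + 1) (by omega)]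
    | succ r =>
      rw [qGaussIntegral_X_pow_succ_mul, ih fun k hk => h (k + 1) (by omega),
        ih fun k hk => h k (by omega), mul_zero, add_zero]

lemma qGaussIntegral_X_pow_mul_self (hq0 : q ≠ 0) (hq1 : |q| < 1) (γ : ℝ) (r : ℕ) :
    qGaussIntegral hq0 hq1 γ (X ^ r * qHermitePoly q r) =
      qInt q γ (qGauss q) * qPoch q q r / q ^ (r ^ 2) := by
  induction r with
  | zero => simp [qHermitePoly_zero, qGaussIntegral_one, qPoch]
  | succ r ih =>
    rw [qGaussIntegral_X_pow_succ_mul, qGaussIntegral_X_pow_mul_eq_zero hq0 hq1 γ (by omega), ih,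
      qPoch_self_succ]
    field_simp
    ring

lemma qGaussIntegral_X_pow_add_two_mul (hq0 : q ≠ 0) (hq1 : |q| < 1) (γ : ℝ) (r k : ℕ) :
    qGaussIntegral hq0 hq1 γ (X ^ (r + 2 * k) * qHermitePoly q r) =
      qInt q γ (qGauss q) * qPoch q q (r + 2 * k) /
        (q ^ (2 * r * k + k ^ 2 + r ^ 2) * qPoch (q ^ 2) (q ^ 2) k) := by
  induction k generalizing r with
  | zero =>
    have h0 : qPoch (q ^ 2) (q ^ 2) 0 = 1 := Finset.prod_range_zero _
    simp [qGaussIntegral_X_pow_mul_self, h0]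
  | succ k ihk =>
    have hQ := (qPoch_sq_pos hq1 k).ne'
    have hk : 1 - q ^ (2 * k + 2) ≠ 0 := (one_sub_pow_succ_pos hq1 (2 * k + 1)).ne'
    induction r with
    | zero =>
      rw [show 0 + 2 * (k + 1) = 1 + 2 * k + 1 by ring, X_pow_succ_mul_qHermitePoly_zero, ihk,
        qPoch_sq_succ, qPoch_self_succ q (1 + 2 * k)]
      field_simp
      ring
    | succ r ihr =>
      rw [show r + 1 + 2 * (k + 1) = r + 2 * (k + 1) + 1 by ring, qGaussIntegral_X_pow_succ_mul,
        ihr, show r + 2 * (k + 1) = r + 2 + 2 * k by ring, ihk, qPoch_sq_succ,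
        qPoch_self_succ q (r + 2 + 2 * k)]
      field_simp
      ring

/-! ### The q-convolution -/

/-- The `e`-th term at `x` of the series defining the `q`-convolution of two polynomials times the
`q`-Gaussian, as a bilinear form in the two polynomials. -/
def qConvTerm (hq0 : q ≠ 0) (hq1 : |q| < 1) (γ x : ℝ) (e : ℕ) : ℝ[X] →ₗ[ℝ] ℝ[X] →ₗ[ℝ] ℝ :=
  ((-1) ^ e * q ^ (e + 1).choose 2 / qFact q e) •
    (qGaussIntegral hq0 hq1 γ ∘ₗ LinearMap.mulLeft ℝ (X ^ e)).smulRight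
      (LinearMap.proj x ∘ₗ (qDerivₗ q ^ e) ∘ₗ polyMulGauss q)

lemma qConvTerm_apply (hq0 : q ≠ 0) (hq1 : |q| < 1) (γ x : ℝ) (e : ℕ) (p₁ p₂ : ℝ[X]) :
    qConvTerm hq0 hq1 γ x e p₁ p₂ = (-1) ^ e * q ^ (e + 1).choose 2 / qFact q e *
      (qGaussIntegral hq0 hq1 γ (X ^ e * p₁) * (qDeriv q)^[e] (polyMulGauss q p₂) x) := by
  simp only [qConvTerm, LinearMap.smul_apply, LinearMap.smulRight_apply, LinearMap.comp_apply,
    LinearMap.mulLeft_apply, LinearMap.proj_apply, Module.End.pow_apply, smul_eq_mul]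
  rfl

lemma qConv_polyMulGauss (hq0 : q ≠ 0) (hq1 : |q| < 1) (γ x : ℝ) (p₁ p₂ : ℝ[X]) :
    qConv q γ (polyMulGauss q p₁) (polyMulGauss q p₂) x =
      ∑' e, qConvTerm hq0 hq1 γ x e p₁ p₂ := by
  rw [qConv]
  refine tsum_congr fun e => ?_
  rw [qConvTerm_apply, qMoment_polyMulGauss hq0 hq1]
  ring

lemma choose_two_add_succ_choose_two (e : ℕ) : e.choose 2 + (e + 1).choose 2 = e ^ 2 := by
  induction e with
  | zero => rfl
  | succ e ih =>
    rw [Nat.choose_succ_succ' (e + 1) 1, Nat.choose_one_right]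
    rw [Nat.choose_succ_succ' e 1, Nat.choose_one_right] at ih ⊢
    linarith

lemma qConvTerm_qHermitePoly (hq0 : q ≠ 0) (hq1 : |q| < 1) (γ : ℝ) {x : ℝ} (hx : x ≠ 0)
    (r l e : ℕ) :
    qConvTerm hq0 hq1 γ x e (qHermitePoly q r) (qHermitePoly q l) =
      q ^ (e ^ 2 + l * e) * qGaussIntegral hq0 hq1 γ (X ^ e * qHermitePoly q r) /
        qPoch q q e * polyMulGauss q (qHermitePoly q (l + e)) x := by
  have hq := one_sub_ne_zero_of_abs_lt_one hq1
  have hP := (qPoch_self_pos hq1 e).ne'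
  have hsign : (-1 : ℝ) ^ e * (-1) ^ e = 1 := by rw [← mul_pow, neg_one_mul, neg_neg, one_pow]
  rw [qConvTerm_apply, iterate_qDeriv_polyMulGauss_qHermitePoly hq0 hq1 l e hx, qFact,
    ← choose_two_add_succ_choose_two]
  field_simp
  rw [sq, hsign]
  ring

lemma hasSum_qConvTerm_qHermitePoly (hq0 : q ≠ 0) (hq1 : |q| < 1) (γ : ℝ) {x : ℝ} (hx : x ≠ 0)
    (r l : ℕ) :
    HasSum (fun e => qConvTerm hq0 hq1 γ x e (qHermitePoly q r) (qHermitePoly q l))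
      (qInt q γ (qGauss q) * q ^ (l * r) *
        ∑' k : ℕ, q ^ (3 * k ^ 2) * q ^ (2 * (r + l) * k) / qPoch (q ^ 2) (q ^ 2) k *
          polyMulGauss q (qHermitePoly q (l + r + 2 * k)) x) := by
  have hinj : Function.Injective fun k : ℕ => r + 2 * k := fun a b (h : r + 2 * a = r + 2 * b) => by
    omega
  have hseries : Summable fun k : ℕ => q ^ (3 * k ^ 2) * q ^ (2 * (r + l) * k) /
      qPoch (q ^ 2) (q ^ 2) k * polyMulGauss q (qHermitePoly q (l + r + 2 * k)) x :=
    ((summable_qHermitePoly_series hq0 hq1 (l + r) x).mul_right (qGauss q x)).congr fun k => by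
      rw [polyMulGauss_apply, add_comm r l, mul_assoc]
  rw [← hinj.hasSum_iff]
  · refine (hseries.hasSum.mul_left _).congr_fun fun k => ?_
    have hP := (qPoch_self_pos hq1 (r + 2 * k)).ne'
    have hQ := (qPoch_sq_pos hq1 k).ne'
    rw [Function.comp_apply, qConvTerm_qHermitePoly hq0 hq1 γ hx, qGaussIntegral_X_pow_add_two_mul,
      ← add_assoc l r]
    field_simp
    ring
  · intro e he
    rw [qConvTerm_qHermitePoly hq0 hq1 γ hx,
      qGaussIntegral_X_pow_mul_eq_zero hq0 hq1 γ fun k hk => he ⟨k, hk.symm⟩, mul_zero, zero_div,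
      zero_mul]

lemma exists_hasSum_swap_of_span_eq_top {ι R M N : Type*} [CommSemiring R] [AddCommMonoid M]
    [Module R M] [AddCommMonoid N] [Module R N] [TopologicalSpace N] [ContinuousAdd N]
    [ContinuousConstSMul R N] (T : ι → M →ₗ[R] M →ₗ[R] N) {S : Set M}
    (hS : Submodule.span R S = ⊤)
    (h : ∀ a ∈ S, ∀ b ∈ S, ∃ s, HasSum (fun i => T i a b) s ∧ HasSum (fun i => T i b a) s)
    (a b : M) : ∃ s, HasSum (fun i => T i a b) s ∧ HasSum (fun i => T i b a) s := by
  have ha : a ∈ Submodule.span R S := hS ▸ Submodule.mem_top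
  have hb : b ∈ Submodule.span R S := hS ▸ Submodule.mem_top
  induction ha, hb using Submodule.span_induction₂ with
  | mem_mem a b ha hb => exact h a ha b hb
  | zero_left | zero_right => exact ⟨0, by simp [hasSum_zero], by simp [hasSum_zero]⟩
  | add_left _ _ _ _ _ _ h h' | add_right _ _ _ _ _ _ h h' =>
    obtain ⟨s, hs₁, hs₂⟩ := h
    obtain ⟨t, ht₁, ht₂⟩ := h'
    exact ⟨s + t, by simpa using hs₁.add ht₁, by simpa using hs₂.add ht₂⟩
  | smul_left c _ _ _ _ h | smul_right c _ _ _ _ h =>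
    obtain ⟨s, hs₁, hs₂⟩ := h
    exact ⟨c • s, by simpa using hs₁.const_smul c, by simpa using hs₂.const_smul c⟩

lemma qConv_polyMulGauss_comm (hq0 : q ≠ 0) (hq1 : |q| < 1) (γ : ℝ) {x : ℝ} (hx : x ≠ 0)
    (p₁ p₂ : ℝ[X]) :
    qConv q γ (polyMulGauss q p₁) (polyMulGauss q p₂) x =
      qConv q γ (polyMulGauss q p₂) (polyMulGauss q p₁) x := by
  obtain ⟨s, hs₁, hs₂⟩ : ∃ s, HasSum (fun e => qConvTerm hq0 hq1 γ x e p₁ p₂) s ∧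
      HasSum (fun e => qConvTerm hq0 hq1 γ x e p₂ p₁) s := by
    refine exists_hasSum_swap_of_span_eq_top _ (span_qHermitePoly q) ?_ p₁ p₂
    rintro _ ⟨r, rfl⟩ _ ⟨l, rfl⟩
    refine ⟨_, hasSum_qConvTerm_qHermitePoly hq0 hq1 γ hx r l, ?_⟩
    simpa only [mul_comm r l, add_comm r l] using hasSum_qConvTerm_qHermitePoly hq0 hq1 γ hx l r
  rw [qConv_polyMulGauss hq0 hq1, qConv_polyMulGauss hq0 hq1, hs₁.tsum_eq, hs₂.tsum_eq]

lemma qConv_qHermiteII (hq0 : q ≠ 0) (hq1 : |q| < 1) (γ : ℝ) {x : ℝ} (hx : x ≠ 0) (r l : ℕ) :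
    qConv q γ (fun y => qHermiteII q r y * qGauss q y)
        (fun y => qHermiteII q l y * qGauss q y) x =
      qInt q γ (qGauss q) * q ^ (l * r) *
        ∑' k : ℕ, q ^ (3 * k ^ 2) * q ^ (2 * (r + l) * k) / qPoch (q ^ 2) (q ^ 2) k *
          (qHermiteII q (l + r + 2 * k) x * qGauss q x) := by
  simp only [← polyMulGauss_qHermitePoly hq0 hq1]
  exact (qConv_polyMulGauss hq0 hq1 γ x _ _).trans
    (hasSum_qConvTerm_qHermitePoly hq0 hq1 γ hx r l).tsum_eq

theorem stmt14_general (hq0 : q ≠ 0) (hq1 : |q| < 1) (γ : ℝ) (r l : ℕ) :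
    (∀ x : ℝ, x ≠ 0 →
      qConv q γ (fun y => qHermiteII q r y * qGauss q y)
          (fun y => qHermiteII q l y * qGauss q y) x =
        qInt q γ (qGauss q) * q ^ (l * r) *
          ∑' k : ℕ, q ^ (3 * k ^ 2) * q ^ (2 * (r + l) * k) / qPoch (q ^ 2) (q ^ 2) k *
            (qHermiteII q (l + r + 2 * k) x * qGauss q x)) ∧
    (∀ p₁ p₂ : ℝ[X], ∀ x : ℝ, x ≠ 0 →
      qConv q γ (fun y => p₁.eval y * qGauss q y) (fun y => p₂.eval y * qGauss q y) x =
        qConv q γ (fun y => p₂.eval y * qGauss q y) (fun y => p₁.eval y * qGauss q y) x) :=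
  ⟨fun _ hx => qConv_qHermiteII hq0 hq1 γ hx r l,
    fun p₁ p₂ _ hx => qConv_polyMulGauss_comm hq0 hq1 γ hx p₁ p₂⟩

end

/-- Convolution of q-Hermite Gaussians and commutativity of polynomials times Gaussian. -/
theorem stmt14 (q γ : ℝ) (hq : q ∈ Set.Ioo (0 : ℝ) 1) (hγ : γ ∈ Set.Ioo (0 : ℝ) 1)
    (r l : ℕ) :
    (∀ x : ℝ, x ≠ 0 →
      qConv q γ (fun y => qHermiteII q r y * qGauss q y)
          (fun y => qHermiteII q l y * qGauss q y) x =
        qInt q γ (qGauss q) * q ^ (l * r) *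
          ∑' k : ℕ, q ^ (3 * k ^ 2) * q ^ (2 * (r + l) * k) / qPoch (q ^ 2) (q ^ 2) k *
            (qHermiteII q (l + r + 2 * k) x * qGauss q x)) ∧
    (∀ p₁ p₂ : Polynomial ℝ, ∀ x : ℝ, x ≠ 0 →
      qConv q γ (fun y => p₁.eval y * qGauss q y) (fun y => p₂.eval y * qGauss q y) x =
        qConv q γ (fun y => p₂.eval y * qGauss q y) (fun y => p₁.eval y * qGauss q y) x) := by
  exact stmt14_general hq.1.ne' (abs_lt.2 ⟨by linarith [hq.1], hq.2⟩) γ r l
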